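/- Let u be a smooth divergence-free vector field on ℝ², and let ω solve the linear transport equation ∂_tω + u·∇ω = 0 on [0,1] with ω(0) = ω₀ ∈ C_c^∞(ℝ²). Suppose max_{0≤t≤1}(‖D²u(t)‖_{L⁴} + ‖Du(t)‖_{L^∞}) ≤ C₁ < ∞. Then max_{0≤t≤1} ‖ω(t)‖_{H²} ≤ C₂ where C₂ depends only on ‖ω₀‖_{H²} and C₁. -/

import Mathlib

/-!
Write `W(t,x) = ω(t,x)`, a smooth function on space-time. Differentiating `∂ₜW + u · ∇W = 0` once and
twice in space shows that `∂ᵢW` and `∂ₖ∂ᵢW` solve the same equation with right-hand sides of the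
types `Du · DW` and `Du · D²W + D²u · DW` (`transp_first`, `transp_second`). Since `div u = 0`, the
transport term integrates to zero against the solution (`energy_deriv`), so the derivative of
`E(t) = ∫ |W|² + |DW|² + |D²W|²` only sees these commutators. The terms with `Du` are at most
`C₁ E`. The remaining one is bounded by `E + ‖D²u‖₄² ‖DW‖₄²`, up to constants, and Ladyzhenskaya's
inequality (`exists_ladyzhenskaya`) gives `‖DW‖₄² ≲ ∫ |DW| |D²W| ≤ E`. Hence `E' ≤ K E` with `K`
depending on `C₁` alone, and Grönwall's inequality concludes (`energy_growth`).

The energy is taken over one fixed ball, and integrating by parts without boundary terms requires the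
support of `ω(t)` to stay inside it for all `t ∈ [0,1]`. The bound on `Du` gives `u`
linear growth in `x`, and a maximum principle for `W² - ε t` on a compact region of space-time that
backward characteristics do not leave shows that the support spreads at a controlled rate
(`vanish_outside`, `exists_uniform_support`).
-/

open MeasureTheory Set
open scoped ENNReal

noncomputable section

/-- The (inhomogeneous) `H²` Sobolev norm of a scalar function on `ℝ²`,
`‖f‖₂ + ‖Df‖₂ + ‖D²f‖₂`. -/
def h2Norm (f : EuclideanSpace ℝ (Fin 2) → ℝ) : ℝ :=
  (eLpNorm f 2 volume).toReal
    + (eLpNorm (fun x => fderiv ℝ f x) 2 volume).toReal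
    + (eLpNorm (fun x => fderiv ℝ (fderiv ℝ f) x) 2 volume).toReal

/-! ### Derivatives on space-time and commutators -/

/-- The Euclidean plane `ℝ²`; space-time is `ℝ × Plane`, with time as first component. -/
abbrev Plane : Type := EuclideanSpace ℝ (Fin 2)

/-- The derivative of a function on space-time in the constant direction `v`. Handling every
derivative, in time or in space, as such a directional derivative lets a single commutation rule
`dd_comm` serve for all of them. -/
def dd {G : Type*} [NormedAddCommGroup G] [NormedSpace ℝ G] (v : ℝ × Plane) (F : ℝ × Plane → G) :
    ℝ × Plane → G :=
  fun p => fderiv ℝ F p v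

/-- The time direction, so that `dd tdir` is `∂ₜ`. -/
def tdir : ℝ × Plane := (1, 0)

/-- The `i`-th space direction, so that `dd (xdir i)` is `∂ᵢ`. -/
def xdir (i : Fin 2) : ℝ × Plane := (0, EuclideanSpace.single i 1)

/-- The transport operator `∂ₜ + U · ∇`, for a drift given by its two components. -/
def transp (U : Fin 2 → ℝ × Plane → ℝ) (F : ℝ × Plane → ℝ) : ℝ × Plane → ℝ :=
  fun p => dd tdir F p + ∑ j, U j p * dd (xdir j) F p

theorem dd_contDiff {G : Type*} [NormedAddCommGroup G] [NormedSpace ℝ G] {F : ℝ × Plane → G}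
    (hF : ContDiff ℝ (⊤ : ℕ∞) F) (v : ℝ × Plane) : ContDiff ℝ (⊤ : ℕ∞) (dd v F) :=
  (hF.fderiv_right (m := (⊤ : ℕ∞)) (by simp)).clm_apply contDiff_const

theorem dd_comm {F : ℝ × Plane → ℝ} (hF : ContDiff ℝ (⊤ : ℕ∞) F) (v w : ℝ × Plane) :
    dd v (dd w F) = dd w (dd v F) := by
  have hd : Differentiable ℝ (fderiv ℝ F) :=
    (hF.fderiv_right (m := (⊤ : ℕ∞)) (by simp)).differentiable (by simp)
  have key : ∀ (p a b : ℝ × Plane), dd a (dd b F) p = fderiv ℝ (fderiv ℝ F) p a b := by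
    intro p a b
    have := ((hd p).hasFDerivAt.clm_apply (hasFDerivAt_const b p)).fderiv
    change fderiv ℝ (fun y => fderiv ℝ F y b) p a = _
    rw [this]
    simp
  funext p
  rw [key, key]
  have hle : (2 : WithTop ℕ∞) ≤ ((⊤ : ℕ∞) : WithTop ℕ∞) := by
    exact WithTop.coe_le_coe.2 (le_top : (2 : ℕ∞) ≤ ⊤)
  exact (hF.contDiffAt.isSymmSndFDerivAt (by simpa using hle)).eq v w

theorem dd_mul {F G : ℝ × Plane → ℝ} (hF : ContDiff ℝ (⊤ : ℕ∞) F) (hG : ContDiff ℝ (⊤ : ℕ∞) G)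
    (v p : ℝ × Plane) :
    dd v (fun q => F q * G q) p = dd v F p * G p + F p * dd v G p := by
  simp only [dd]
  rw [fderiv_fun_mul (hF.differentiable (by simp) p) (hG.differentiable (by simp) p)]
  simp
  ring

theorem dd_add {F G : ℝ × Plane → ℝ} (hF : ContDiff ℝ (⊤ : ℕ∞) F) (hG : ContDiff ℝ (⊤ : ℕ∞) G)
    (v p : ℝ × Plane) :
    dd v (fun q => F q + G q) p = dd v F p + dd v G p := by
  simp only [dd]
  rw [fderiv_fun_add (hF.differentiable (by simp) p) (hG.differentiable (by simp) p)]
  simp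

theorem dd_neg {F : ℝ × Plane → ℝ} (v p : ℝ × Plane) :
    dd v (fun q => - F q) p = - dd v F p := by
  simp only [dd]
  rw [fderiv_fun_neg]
  simp

theorem transp_contDiff {U : Fin 2 → ℝ × Plane → ℝ} (hU : ∀ j, ContDiff ℝ (⊤ : ℕ∞) (U j))
    {F : ℝ × Plane → ℝ} (hF : ContDiff ℝ (⊤ : ℕ∞) F) : ContDiff ℝ (⊤ : ℕ∞) (transp U F) :=
  (dd_contDiff hF _).add (ContDiff.sum fun j _ => (hU j).mul (dd_contDiff hF _))

/-- The commutator of the transport operator with a directional derivative is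
`[∂ₜ + U · ∇, ∂ᵥ] F = -∂ᵥU · ∇F`. -/
theorem transp_dd {U : Fin 2 → ℝ × Plane → ℝ} (hU : ∀ j, ContDiff ℝ (⊤ : ℕ∞) (U j))
    {F : ℝ × Plane → ℝ} (hF : ContDiff ℝ (⊤ : ℕ∞) F) (v p : ℝ × Plane) :
    transp U (dd v F) p = dd v (transp U F) p - ∑ j, dd v (U j) p * dd (xdir j) F p := by
  have h (j : Fin 2) := (hU j).mul (dd_contDiff hF (xdir j))
  have hT : transp U F = fun q => dd tdir F q + (U 0 q * dd (xdir 0) F q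
      + U 1 q * dd (xdir 1) F q) := by
    funext q
    simp only [transp, Fin.sum_univ_two]
  rw [hT]
  simp only [transp, Fin.sum_univ_two]
  rw [dd_add (dd_contDiff hF _) ((h 0).add (h 1)), dd_add (h 0) (h 1),
    dd_mul (hU 0) (dd_contDiff hF _), dd_mul (hU 1) (dd_contDiff hF _),
    dd_comm hF v tdir, dd_comm hF v (xdir 0), dd_comm hF v (xdir 1)]
  ring

/-- Derivatives of a time slice are space-time derivatives in space directions. -/
theorem fderiv_slice {G : Type*} [NormedAddCommGroup G] [NormedSpace ℝ G] {F : ℝ × Plane → G}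
    (hF : ContDiff ℝ (⊤ : ℕ∞) F) (t : ℝ) (x e : Plane) :
    fderiv ℝ (fun y => F (t, y)) x e = dd (0, e) F (t, x) := by
  have h := ((hF.differentiable (by simp) (t, x)).hasFDerivAt.comp x
    (hasFDerivAt_prodMk_right t x)).fderiv
  change fderiv ℝ (F ∘ fun y => (t, y)) x e = _
  rw [h]
  simp [dd]

/-- Two functions that agree on the slice `{t} × ℝ²` have the same space derivatives there. The
equation is only known for `t ∈ [0,1]`, so it may be differentiated in space but not in time. -/
theorem dd_congr {F G : ℝ × Plane → ℝ} (hF : ContDiff ℝ (⊤ : ℕ∞) F)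
    (hG : ContDiff ℝ (⊤ : ℕ∞) G) {t : ℝ} (h : ∀ x, F (t, x) = G (t, x)) (i : Fin 2) (x : Plane) :
    dd (xdir i) F (t, x) = dd (xdir i) G (t, x) := by
  rw [xdir, ← fderiv_slice hF, ← fderiv_slice hG]
  simp only [h]

theorem dd_line {F : ℝ × Plane → ℝ} (hF : ContDiff ℝ (⊤ : ℕ∞) F) (p v : ℝ × Plane) :
    HasDerivAt (fun s : ℝ => F (p + s • v)) (dd v F p) 0 := by
  have h1 : HasDerivAt (fun s : ℝ => p + s • v) v 0 := by
    simpa using ((hasDerivAt_id (0:ℝ)).smul_const v).const_add p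
  have h2 : HasFDerivAt F (fderiv ℝ F p) (p + (0:ℝ) • v) := by
    simpa using (hF.differentiable (by simp) p).hasFDerivAt
  exact h2.comp_hasDerivAt (0:ℝ) h1

/-- If `∂ₜW + U · ∇W = 0` at time `t`, then `∂ᵢW` is transported up to the commutator `-∂ᵢU · ∇W`. -/
theorem transp_first {U : Fin 2 → ℝ × Plane → ℝ} (hU : ∀ j, ContDiff ℝ (⊤ : ℕ∞) (U j))
    {W : ℝ × Plane → ℝ} (hW : ContDiff ℝ (⊤ : ℕ∞) W) {t : ℝ} (hT : ∀ x, transp U W (t, x) = 0)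
    (i : Fin 2) (x : Plane) :
    transp U (dd (xdir i) W) (t, x)
      = -∑ j, dd (xdir i) (U j) (t, x) * dd (xdir j) W (t, x) := by
  rw [transp_dd hU hW, dd_congr (transp_contDiff hU hW) (contDiff_const (c := (0:ℝ))) hT]
  simp [dd]

/-- The twice differentiated equation: `D²W` is transported up to terms of type `DU · D²W` and
`D²U · DW`. -/
theorem transp_second {U : Fin 2 → ℝ × Plane → ℝ} (hU : ∀ j, ContDiff ℝ (⊤ : ℕ∞) (U j))
    {W : ℝ × Plane → ℝ} (hW : ContDiff ℝ (⊤ : ℕ∞) W) {t : ℝ} (hT : ∀ x, transp U W (t, x) = 0)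
    (k i : Fin 2) (x : Plane) :
    transp U (dd (xdir k) (dd (xdir i) W)) (t, x)
      = -∑ j, (dd (xdir k) (U j) (t, x) * dd (xdir j) (dd (xdir i) W) (t, x)
          + dd (xdir i) (U j) (t, x) * dd (xdir k) (dd (xdir j) W) (t, x)
          + dd (xdir k) (dd (xdir i) (U j)) (t, x) * dd (xdir j) W (t, x)) := by
  have hm (j : Fin 2) := (dd_contDiff (hU j) (xdir i)).mul (dd_contDiff hW (xdir j))
  have hs : ContDiff ℝ (⊤ : ℕ∞) (fun p => -∑ j, dd (xdir i) (U j) p * dd (xdir j) W p) :=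
    (ContDiff.sum fun j _ => hm j).neg
  rw [transp_dd hU (dd_contDiff hW _), dd_congr (transp_contDiff hU (dd_contDiff hW _)) hs
    (fun y => transp_first hU hW hT i y)]
  simp only [Fin.sum_univ_two]
  rw [dd_neg, dd_add (hm 0) (hm 1), dd_mul (dd_contDiff (hU 0) _) (dd_contDiff hW _),
    dd_mul (dd_contDiff (hU 1) _) (dd_contDiff hW _)]
  ring

/-! ### Finite speed of propagation -/

open Filter Topology in
theorem eventually_lt_of_deriv_pos {φ : ℝ → ℝ} {d : ℝ} (h : HasDerivAt φ d 0) (hd : 0 < d) :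
    ∀ᶠ s in 𝓝[>] (0:ℝ), φ 0 < φ s := by
  have h1 := (hasDerivAt_iff_tendsto_slope.1 h).eventually (lt_mem_nhds hd)
  have h2 : ∀ᶠ s in 𝓝[>] (0:ℝ), 0 < slope φ 0 s :=
    h1.filter_mono (nhdsWithin_mono _ fun s hs => ne_of_gt hs)
  filter_upwards [h2, self_mem_nhdsWithin] with s hs hs0
  rw [slope_def_field, sub_zero] at hs
  have := (div_pos_iff_of_pos_right (show (0:ℝ) < s from hs0)).1 hs
  linarith

/-- The weight `1 + |x|²`, smooth and with bounded sublevel sets. -/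
def wt (x : Plane) : ℝ := 1 + (x 0 ^ 2 + x 1 ^ 2)

theorem wt_eq (x : Plane) : wt x = 1 + ‖x‖ ^ 2 := by
  rw [wt, EuclideanSpace.real_norm_sq_eq, Fin.sum_univ_two]

theorem wt_continuous : Continuous wt := by
  unfold wt; fun_prop

/-- The transport operator is the derivative in the direction `(1, U)` of the characteristics. -/
theorem transp_eq_dd (U : Fin 2 → ℝ × Plane → ℝ) (F : ℝ × Plane → ℝ) (p : ℝ × Plane) :
    transp U F p = dd (tdir + ∑ j, U j p • xdir j) F p := by
  simp [transp, dd]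

open Filter Topology in
/-- Finite speed of propagation, for a drift of at most linear growth. The hypothesis `hK` says that
along characteristics `wt` grows or decays at a rate less than `K`, so data vanishing where
`A ≤ wt` give a solution vanishing where `A ≤ wt · exp (-K t)`.

No flow map is used. On the compact region bounded by `A ≤ wt · exp (-K s)` and
`wt · exp (K s) ≤ const`, which a characteristic followed backwards in time does not leave, the
function `W² - ε s` cannot have its maximum at a time `s > 0`: a small step backwards along the
characteristic would increase it. Hence the maximum is taken at `s = 0`, where it is zero. -/
theorem vanish_outside {U : Fin 2 → ℝ × Plane → ℝ} {W : ℝ × Plane → ℝ}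
    (hW : ContDiff ℝ (⊤ : ℕ∞) W)
    (hT : ∀ t ∈ Icc (0:ℝ) 1, ∀ x, transp U W (t, x) = 0) {K A : ℝ} (hK0 : 0 ≤ K)
    (hK : ∀ t ∈ Icc (0:ℝ) 1, ∀ x : Plane,
      2 * |x 0 * U 0 (t, x) + x 1 * U 1 (t, x)| < K * wt x)
    (hA : ∀ x, A ≤ wt x → W (0, x) = 0) {t : ℝ} (ht : t ∈ Icc (0:ℝ) 1) (x : Plane)
    (hx : A ≤ wt x * Real.exp (-(K * t))) : W (t, x) = 0 := by
  set A' := wt x * Real.exp (K * t) with hA'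
  set D : Set (ℝ × Plane) := {p | p.1 ∈ Icc (0:ℝ) 1 ∧ A ≤ wt p.2 * Real.exp (-(K * p.1))
    ∧ wt p.2 * Real.exp (K * p.1) ≤ A'} with hD
  have hc2 : Continuous fun p : ℝ × Plane => wt p.2 := wt_continuous.comp continuous_snd
  have hDc : IsCompact D := by
    refine ((isCompact_Icc (a := (0:ℝ)) (b := 1)).prod (isCompact_closedBall (0 : Plane) A')).of_isClosed_subset ?_ ?_
    · refine (isClosed_Icc.preimage continuous_fst).inter (IsClosed.inter ?_ ?_)
      · exact isClosed_le continuous_const (hc2.mul (by fun_prop))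
      · exact isClosed_le (hc2.mul (by fun_prop)) continuous_const
    · rintro ⟨s, y⟩ ⟨hs, -, h2⟩
      refine ⟨hs, ?_⟩
      have h3 : wt y * 1 ≤ wt y * Real.exp (K * s) := by
        refine mul_le_mul_of_nonneg_left (Real.one_le_exp (mul_nonneg hK0 hs.1)) ?_
        rw [wt_eq]; positivity
      rw [mem_closedBall_zero_iff]
      simp only at h2 ⊢
      rw [wt_eq] at h3
      rw [wt_eq] at h2
      nlinarith [sq_nonneg (‖y‖ - 1), norm_nonneg y]
  have hmem : (t, x) ∈ D := ⟨ht, hx, le_refl _⟩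
  have key : ∀ ε > 0, W (t, x) ^ 2 - ε * t ≤ 0 := by
    intro ε hε
    obtain ⟨⟨s, y⟩, hpD, hmax⟩ := hDc.exists_isMaxOn ⟨_, hmem⟩
      (f := fun p : ℝ × Plane => W p ^ 2 - ε * p.1)
      ((hW.continuous.pow 2).sub (by fun_prop)).continuousOn
    refine (hmax hmem).trans ?_
    simp only
    obtain ⟨hs, h1, h2⟩ := hpD
    simp only at hs h1 h2
    rcases eq_or_lt_of_le hs.1 with h0 | h0
    · subst h0
      rw [hA y (by simpa using h1)]; simp
    -- At a maximum with `s > 0`, step from `(s, y)` in the direction `-w` of the past.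
    exfalso
    set w : ℝ × Plane := tdir + ∑ j, U j (s, y) • xdir j with hw
    have hline : HasDerivAt (fun r : ℝ => W ((s, y) + r • (-w))) 0 0 := by
      have := dd_line hW (s, y) (-w)
      have h4 : dd (-w) W (s, y) = 0 := by
        have h5 := hT s hs y
        rw [transp_eq_dd] at h5
        simp only [dd] at h5 ⊢
        rw [map_neg, h5, neg_zero]
      rwa [h4] at this
    have e1 : ∀ r : ℝ, ((s, y) + r • (-w)).1 = s - r := by
      intro r
      simp [hw, tdir, xdir]; ring
    have e2 : ∀ r : ℝ, wt ((s, y) + r • (-w)).2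
        = 1 + ((y 0 - r * U 0 (s, y)) ^ 2 + (y 1 - r * U 1 (s, y)) ^ 2) := by
      intro r
      simp [hw, tdir, xdir, wt]; ring
    have hd (a : ℝ) (b : ℝ) : HasDerivAt (fun r : ℝ => a - r * b) (-b) 0 := by
      simpa using ((hasDerivAt_id (0:ℝ)).mul_const b).const_sub a
    have hN : HasDerivAt (fun r : ℝ => wt ((s, y) + r • (-w)).2)
        (-2 * (y 0 * U 0 (s, y) + y 1 * U 1 (s, y))) 0 := by
      rw [funext e2]
      have := (((hd (y 0) (U 0 (s, y))).fun_pow 2).add ((hd (y 1) (U 1 (s, y))).fun_pow 2)).const_add 1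
      refine HasDerivAt.congr_deriv this ?_
      norm_num
      ring
    have hex (c : ℝ) : HasDerivAt (fun r : ℝ => Real.exp (c * (s - r)))
        (Real.exp (c * s) * (-c)) 0 := by
      have := ((((hasDerivAt_id (0:ℝ)).const_sub s).const_mul c).exp)
      simpa using this
    have e3 : wt ((s, y) + (0:ℝ) • (-w)).2 = wt y := by simp
    have hb := hK s hs y
    have hb' : |2 * (y 0 * U 0 (s, y) + y 1 * U 1 (s, y))| < K * wt y := by
      rw [abs_mul, abs_two]; exact hb
    -- `g1` and `g2` keep the step inside `D`, and `g3` says that it increases the function.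
    rw [abs_lt] at hb'
    have g1 := eventually_lt_of_deriv_pos (hN.mul (hex (-K))) (by
      rw [e3, sub_zero]
      have := mul_pos (Real.exp_pos (-K * s)) (sub_pos.2 hb'.2)
      nlinarith [this])
    have g2 := eventually_lt_of_deriv_pos (hN.mul (hex K)).neg (by
      rw [e3, sub_zero]
      have := mul_pos (Real.exp_pos (K * s)) (neg_lt_iff_pos_add.1 hb'.1)
      nlinarith [this])
    have g3 := eventually_lt_of_deriv_pos ((hline.pow 2).sub ((hd s 1).const_mul ε)) (by
      simp; exact hε)
    have g4 : ∀ᶠ r in 𝓝[>] (0:ℝ), r < s := nhdsWithin_le_nhds (gt_mem_nhds h0)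
    obtain ⟨r, f1, f2, f3, f4, f5⟩ :=
      (g1.and (g2.and (g3.and (g4.and self_mem_nhdsWithin)))).exists
    have f5' : 0 < r := f5
    have hrD : (s, y) + r • (-w) ∈ D := by
      refine ⟨?_, ?_, ?_⟩
      · rw [e1]; exact ⟨by linarith, by linarith [hs.2]⟩
      · rw [e1]
        refine h1.trans ?_
        have := f1.le
        simpa using this
      · rw [e1]
        refine le_trans ?_ h2
        have := f2.le
        simpa using this
    have h7 := isMaxOn_iff.1 hmax _ hrD
    rw [e1] at h7
    simp at f3
    simp at h7
    linarith
  have h0 : W (t, x) ^ 2 ≤ 0 := by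
    refine le_of_forall_pos_le_add fun ε hε => ?_
    have := key ε hε
    nlinarith [ht.2]
  exact pow_eq_zero_iff (two_ne_zero) |>.1 (le_antisymm h0 (sq_nonneg _))

/-! ### The energy identity -/

theorem slice_contDiff {G : Type*} [NormedAddCommGroup G] [NormedSpace ℝ G] {F : ℝ × Plane → G}
    (hF : ContDiff ℝ (⊤ : ℕ∞) F) (t : ℝ) : ContDiff ℝ (⊤ : ℕ∞) (fun x => F (t, x)) :=
  hF.comp (contDiff_const.prodMk contDiff_id)

theorem integrableOn_slice {G : ℝ × Plane → ℝ} (hG : Continuous G) (t R : ℝ) :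
    IntegrableOn (fun x => G (t, x)) (Metric.closedBall (0 : Plane) R) :=
  (hG.comp (by fun_prop : Continuous fun x : Plane => (t, x))).continuousOn.integrableOn_compact
    (isCompact_closedBall _ _)

open Filter Topology in
theorem hasDerivAt_setIntegral_sq {F : ℝ × Plane → ℝ} (hF : ContDiff ℝ (⊤ : ℕ∞) F) (R t : ℝ) :
    HasDerivAt (fun s => ∫ x in Metric.closedBall (0 : Plane) R, F (s, x) ^ 2)
      (∫ x in Metric.closedBall (0 : Plane) R, 2 * F (t, x) * dd tdir F (t, x)) t := by
  have hcG : Continuous fun p => 2 * F p * dd tdir F p :=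
    (continuous_const.mul hF.continuous).mul (dd_contDiff hF _).continuous
  obtain ⟨C, hC⟩ := ((isCompact_Icc (a := t - 1) (b := t + 1)).prod
    (isCompact_closedBall (0 : Plane) R)).exists_bound_of_continuousOn hcG.continuousOn
  refine (hasDerivAt_integral_of_dominated_loc_of_deriv_le (bound := fun _ => C)
    (F := fun s x => F (s, x) ^ 2)
    (F' := fun s x => 2 * F (s, x) * dd tdir F (s, x)) (s := Icc (t - 1) (t + 1))
    (Icc_mem_nhds (by linarith) (by linarith)) ?_ ?_ ?_ ?_ ?_ ?_).2
  · exact Eventually.of_forall fun s =>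
      (integrableOn_slice (hF.continuous.pow 2) s R).aestronglyMeasurable
  · exact integrableOn_slice (hF.continuous.pow 2) t R
  · exact (integrableOn_slice hcG t R).aestronglyMeasurable
  · filter_upwards [ae_restrict_mem Metric.isClosed_closedBall.measurableSet] with x hx s hs
    exact hC (s, x) ⟨hs, hx⟩
  · exact integrableOn_const (isCompact_closedBall _ _).measure_lt_top.ne
  · refine Eventually.of_forall fun x s _ => ?_
    have h := dd_line hF (s, x) tdir
    have h1 : HasDerivAt (fun r => F (r, x)) (dd tdir F (s, x)) s := by
      have h2 := HasDerivAt.comp_add_const s (-s) (f := fun r : ℝ => F ((s, x) + r • tdir))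
        (f' := dd tdir F (s, x)) (by simpa using h)
      have e : (fun r => F (r, x)) = fun r => F ((s, x) + (r + -s) • tdir) := by
        funext r; simp [tdir]
      rw [e]
      exact h2
    refine (h1.fun_pow 2).congr_deriv ?_
    norm_num

/-- The transport term does not contribute to the `L²` balance: `2 F U · ∇F = U · ∇(F²)`, and
integration by parts turns its integral into that of `-(div U) F² = 0`. -/
theorem integral_transport_eq_zero {U : Fin 2 → ℝ × Plane → ℝ}
    (hU : ∀ j, ContDiff ℝ (⊤ : ℕ∞) (U j))
    (hdiv : ∀ p, ∑ j, dd (xdir j) (U j) p = 0)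
    {F : ℝ × Plane → ℝ} (hF : ContDiff ℝ (⊤ : ℕ∞) F) {R t : ℝ}
    (hs : ∀ x : Plane, R ≤ ‖x‖ → F (t, x) = 0) :
    ∫ x in Metric.closedBall (0 : Plane) R,
      2 * F (t, x) * ∑ j, U j (t, x) * dd (xdir j) F (t, x) = 0 := by
  have hzero : ∀ x ∉ Metric.closedBall (0 : Plane) R, F (t, x) = 0 := by
    intro x hx
    rw [mem_closedBall_zero_iff, not_le] at hx
    exact hs x hx.le
  rw [setIntegral_eq_integral_of_forall_compl_eq_zero (fun x hx => by simp [hzero x hx])]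
  have hsq : ContDiff ℝ (⊤ : ℕ∞) (fun p => F p * F p) := hF.mul hF
  have hc : Continuous fun x : Plane => (t, x) := by fun_prop
  have hint : ∀ G : ℝ × Plane → ℝ, Continuous G → Integrable fun x => G (t, x) * F (t, x) := by
    intro G hG
    refine ((hG.mul hF.continuous).comp hc).integrable_of_hasCompactSupport ?_
    exact HasCompactSupport.intro (isCompact_closedBall (0 : Plane) R)
      fun x hx => by simp [hzero x hx]
  have key : ∀ j, ∫ x, U j (t, x) * (2 * F (t, x) * dd (xdir j) F (t, x))
      = - ∫ x, dd (xdir j) (U j) (t, x) * (F (t, x) * F (t, x)) := by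
    intro j
    have e1 : ∀ x, fderiv ℝ (fun y => F (t, y) * F (t, y)) x (EuclideanSpace.single j 1)
        = 2 * F (t, x) * dd (xdir j) F (t, x) := by
      intro x
      rw [fderiv_slice hsq t x, ← xdir, dd_mul hF hF]; ring
    have e2 : ∀ x, fderiv ℝ (fun y => U j (t, y)) x (EuclideanSpace.single j 1)
        = dd (xdir j) (U j) (t, x) := fun x => fderiv_slice (hU j) t x _
    have := integral_mul_fderiv_eq_neg_fderiv_mul_of_integrable (μ := (volume : Measure Plane))
      (f := fun y => U j (t, y)) (g := fun y => F (t, y) * F (t, y))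
      (v := EuclideanSpace.single j 1) ?_ ?_ ?_
      (fun x _ => (slice_contDiff (hU j) t).differentiable (by simp) x)
      (fun x _ => (slice_contDiff hsq t).differentiable (by simp) x)
    · simpa only [e1, e2] using this
    · simp only [e2]
      refine (hint (fun p => dd (xdir j) (U j) p * F p)
        ((dd_contDiff (hU j) _).continuous.mul hF.continuous)).congr (ae_of_all _ fun x => ?_)
      ring
    · simp only [e1]
      refine (hint (fun p => 2 * U j p * dd (xdir j) F p)
        ((continuous_const.mul (hU j).continuous).mul (dd_contDiff hF _).continuous)).congr
        (ae_of_all _ fun x => ?_)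
      ring
    · refine (hint (fun p => U j p * F p)
        ((hU j).continuous.mul hF.continuous)).congr (ae_of_all _ fun x => ?_)
      ring
  have hI (j : Fin 2) : Integrable fun x => U j (t, x) * (2 * F (t, x) * dd (xdir j) F (t, x)) :=
    (hint (fun p => 2 * U j p * dd (xdir j) F p)
        ((continuous_const.mul (hU j).continuous).mul (dd_contDiff hF _).continuous)).congr
        (ae_of_all _ fun x => by ring)
  have hJ (j : Fin 2) : Integrable fun x => dd (xdir j) (U j) (t, x) * (F (t, x) * F (t, x)) :=
    (hint (fun p => dd (xdir j) (U j) p * F p)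
        ((dd_contDiff (hU j) _).continuous.mul hF.continuous)).congr (ae_of_all _ fun x => by ring)
  calc _ = ∫ x, ∑ j, U j (t, x) * (2 * F (t, x) * dd (xdir j) F (t, x)) := by
        congr 1; funext x; rw [Finset.mul_sum]
        exact Finset.sum_congr rfl fun j _ => by ring
    _ = ∑ j, ∫ x, U j (t, x) * (2 * F (t, x) * dd (xdir j) F (t, x)) :=
        integral_finsetSum _ fun j _ => hI j
    _ = - ∑ j, ∫ x, dd (xdir j) (U j) (t, x) * (F (t, x) * F (t, x)) := by
        simp only [key, Finset.sum_neg_distrib]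
    _ = - ∫ x, ∑ j, dd (xdir j) (U j) (t, x) * (F (t, x) * F (t, x)) := by
        rw [integral_finsetSum _ fun j _ => hJ j]
    _ = 0 := by
        simp only [← Finset.sum_mul, hdiv]; simp

/-- The `L²` energy identity `d/dt ∫ F² = ∫ 2 F (∂ₜ + U · ∇)F`. It is enough that `F` vanishes off
the ball at the single time `t`, since the ball of integration is fixed. -/
theorem energy_deriv {U : Fin 2 → ℝ × Plane → ℝ}
    (hU : ∀ j, ContDiff ℝ (⊤ : ℕ∞) (U j))
    (hdiv : ∀ p, ∑ j, dd (xdir j) (U j) p = 0)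
    {F : ℝ × Plane → ℝ} (hF : ContDiff ℝ (⊤ : ℕ∞) F) {R t : ℝ}
    (hs : ∀ x : Plane, R ≤ ‖x‖ → F (t, x) = 0) :
    HasDerivAt (fun s => ∫ x in Metric.closedBall (0 : Plane) R, F (s, x) ^ 2)
      (∫ x in Metric.closedBall (0 : Plane) R, 2 * F (t, x) * transp U F (t, x)) t := by
  refine (hasDerivAt_setIntegral_sq hF R t).congr_deriv ?_
  have h0 := integral_transport_eq_zero hU hdiv hF hs
  have h1 : Continuous fun p => 2 * F p * dd tdir F p :=
    (continuous_const.mul hF.continuous).mul (dd_contDiff hF _).continuous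
  have h2 : Continuous fun p => 2 * F p * ∑ j, U j p * dd (xdir j) F p :=
    (continuous_const.mul hF.continuous).mul
      (continuous_finsetSum _ fun j _ => (hU j).continuous.mul (dd_contDiff hF _).continuous)
  have h3 := integral_add (integrableOn_slice h1 t R) (integrableOn_slice h2 t R)
  rw [h0, add_zero] at h3
  rw [← h3]
  congr 1
  funext x
  rw [transp]; ring

/-! ### Interpolation inequalities -/

/-- Ladyzhenskaya's inequality `‖f‖₄² ≲ ‖f Df‖₁` in the plane, obtained from the
Gagliardo–Nirenberg–Sobolev inequality `‖g‖₂ ≲ ‖Dg‖₁` with `g = f²`. The integrand `|f| |Df|` is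
replaced by a continuous majorant `m`, which is the form in which it is applied. -/
theorem exists_ladyzhenskaya : ∃ K₀ : ℝ, 0 ≤ K₀ ∧ ∀ (f m : Plane → ℝ) (R : ℝ),
    ContDiff ℝ 1 f → (∀ x, R ≤ ‖x‖ → f x = 0) → Continuous m →
    (∀ x, |f x| * ‖fderiv ℝ f x‖ ≤ m x) →
    ∫ x in Metric.closedBall (0 : Plane) R, f x ^ 4
      ≤ K₀ * (∫ x in Metric.closedBall (0 : Plane) R, m x) ^ 2 := by
  set C := lintegralPowLePowLIntegralFDerivConst (volume : Measure Plane) 2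
  refine ⟨C * 4, by positivity, fun f m R hf hs hm hfm => ?_⟩
  set S := Metric.closedBall (0 : Plane) R with hS
  have hSm : MeasurableSet S := Metric.isClosed_closedBall.measurableSet
  have hzero : ∀ x ∉ S, f x = 0 := by
    intro x hx
    rw [hS, mem_closedBall_zero_iff, not_le] at hx
    exact hs x hx.le
  have hmint : IntegrableOn m S :=
    hm.continuousOn.integrableOn_compact (isCompact_closedBall _ _)
  have hm0 : ∀ x, 0 ≤ m x := fun x => le_trans (by positivity) (hfm x)
  have hfr : (Module.finrank ℝ Plane : ℝ).HolderConjugate 2 := by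
    rw [finrank_euclideanSpace_fin]
    exact Real.HolderConjugate.two_two
  have hsq : ContDiff ℝ 1 (fun x => f x * f x) := hf.mul hf
  have main := lintegral_pow_le_pow_lintegral_fderiv (volume : Measure Plane) hsq
    (HasCompactSupport.intro (isCompact_closedBall (0 : Plane) R)
      fun x hx => by simp [hzero x hx]) hfr
  have hder : ∀ x, ‖fderiv ℝ (fun x => f x * f x) x‖ₑ ≤ S.indicator (fun x => ENNReal.ofReal (2 * m x)) x := by
    intro x
    have hd := hf.differentiable (by simp) x
    rw [fderiv_fun_mul hd hd]
    by_cases hx : x ∈ S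
    · rw [indicator_of_mem hx, ← ofReal_norm]
      refine ENNReal.ofReal_le_ofReal ?_
      rw [← two_smul ℝ, norm_smul, norm_smul, Real.norm_two, Real.norm_eq_abs]
      exact mul_le_mul_of_nonneg_left (hfm x) (by norm_num)
    · rw [← ofReal_norm, hzero x hx, zero_smul, add_zero, norm_zero, ENNReal.ofReal_zero]
      exact zero_le
  have h1 : ∫⁻ x, ‖fderiv ℝ (fun x => f x * f x) x‖ₑ ≤ ENNReal.ofReal (2 * ∫ x in S, m x) := by
    calc _ ≤ ∫⁻ x, S.indicator (fun x => ENNReal.ofReal (2 * m x)) x := lintegral_mono hder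
      _ = ∫⁻ x in S, ENNReal.ofReal (2 * m x) := lintegral_indicator hSm _
      _ = ENNReal.ofReal (∫ x in S, 2 * m x) :=
        (ofReal_integral_eq_lintegral_ofReal (hmint.const_mul 2)
          (ae_of_all _ fun x => by have := hm0 x; simp only [Pi.zero_apply]; linarith)).symm
      _ = _ := by rw [integral_const_mul]
  have hI0 : 0 ≤ ∫ x in S, m x := integral_nonneg hm0
  have h2 : ENNReal.ofReal (∫ x in S, f x ^ 4) ≤ ENNReal.ofReal (C * 4 * (∫ x in S, m x) ^ 2) := by
    calc ENNReal.ofReal (∫ x in S, f x ^ 4) = ∫⁻ x in S, ENNReal.ofReal (f x ^ 4) :=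
          ofReal_integral_eq_lintegral_ofReal
            ((hf.continuous.pow 4).continuousOn.integrableOn_compact (isCompact_closedBall _ _))
            (ae_of_all _ fun x => by simp only [Pi.zero_apply]; positivity)
      _ ≤ ∫⁻ x, ENNReal.ofReal (f x ^ 4) := setLIntegral_le_lintegral _ _
      _ = ∫⁻ x, ‖f x * f x‖ₑ ^ (2:ℝ) := by
          refine lintegral_congr fun x => ?_
          rw [← ofReal_norm, ENNReal.ofReal_rpow_of_nonneg (norm_nonneg _) (by norm_num)]
          congr 1
          rw [Real.norm_eq_abs, Real.rpow_two, sq_abs]; ring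
      _ ≤ C * (∫⁻ x, ‖fderiv ℝ (fun x => f x * f x) x‖ₑ) ^ (2:ℝ) := main
      _ ≤ C * (ENNReal.ofReal (2 * ∫ x in S, m x)) ^ (2:ℝ) := by gcongr
      _ = _ := by
          rw [ENNReal.ofReal_rpow_of_nonneg (by positivity) (by norm_num), Real.rpow_two,
            ← ENNReal.ofReal_coe_nnreal, ← ENNReal.ofReal_mul (by positivity)]
          congr 1; ring
  exact (ENNReal.ofReal_le_ofReal_iff (by positivity)).1 h2

/-- The Cauchy–Schwarz inequality `∫ h² b² ≤ ‖h‖₄² ‖b‖₄²`. -/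
theorem setIntegral_sq_mul_sq_le {h b : Plane → ℝ} (hh : Continuous h) (hb : Continuous b)
    {R H L : ℝ} (hH : 0 ≤ H) (hL : 0 ≤ L)
    (h1 : ∫ x in Metric.closedBall (0 : Plane) R, h x ^ 4 ≤ H ^ 2)
    (h2 : ∫ x in Metric.closedBall (0 : Plane) R, b x ^ 4 ≤ L ^ 2) :
    ∫ x in Metric.closedBall (0 : Plane) R, h x ^ 2 * b x ^ 2 ≤ H * L := by
  have hmem : ∀ g : Plane → ℝ, Continuous g →
      MemLp (fun x => g x ^ 2) (ENNReal.ofReal 2)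
        (volume.restrict (Metric.closedBall (0 : Plane) R)) := by
    intro g hg
    have hc : Continuous fun x => g x ^ 2 := hg.pow 2
    obtain ⟨c, hc'⟩ := (isCompact_closedBall (0 : Plane) R).exists_bound_of_continuousOn
      hc.continuousOn
    have : IsFiniteMeasure (volume.restrict (Metric.closedBall (0 : Plane) R)) :=
      isFiniteMeasure_restrict.2 (isCompact_closedBall (0 : Plane) R).measure_lt_top.ne
    refine MemLp.of_bound hc.aestronglyMeasurable c ?_
    filter_upwards [ae_restrict_mem Metric.isClosed_closedBall.measurableSet] with x hx
    exact hc' x hx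
  have key := integral_mul_le_Lp_mul_Lq_of_nonneg Real.HolderConjugate.two_two
    (μ := volume.restrict (Metric.closedBall (0 : Plane) R))
    (ae_of_all _ fun x => by simp only [Pi.zero_apply]; positivity)
    (ae_of_all _ fun x => by simp only [Pi.zero_apply]; positivity) (hmem h hh) (hmem b hb)
  have e : ∀ g : Plane → ℝ, (fun x => (g x ^ 2) ^ (2:ℝ)) = fun x => g x ^ 4 := by
    intro g; funext x; rw [Real.rpow_two]; ring
  simp only [e] at key
  refine key.trans ?_
  rw [← Real.sqrt_eq_rpow, ← Real.sqrt_eq_rpow]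
  refine mul_le_mul ?_ ?_ (Real.sqrt_nonneg _) hH
  · exact (Real.sqrt_le_sqrt h1).trans (by rw [Real.sqrt_sq hH])
  · exact (Real.sqrt_le_sqrt h2).trans (by rw [Real.sqrt_sq hL])

/-! ### The energy density and the commutator estimate -/

/-- The pointwise estimate of the commutators. Here `b`, `c`, `d`, `g` stand for `DW`, `D²W`, `DU`
and `D²U`, and `S` for the energy density. There are `4 + 16` terms bounded by `2 C₁ S`, and `8`
terms `2 D²W D²U DW`, split by `2 y z ≤ y² + z²` into `S` and `h² |DW|²`. -/
theorem commutator_bound {C₁ S h : ℝ} (b : Fin 2 → ℝ) (c : Fin 2 → Fin 2 → ℝ)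
    (d : Fin 2 → Fin 2 → ℝ) (g : Fin 2 → Fin 2 → Fin 2 → ℝ)
    (hb : ∀ i, b i ^ 2 ≤ S) (hc : ∀ k i, c k i ^ 2 ≤ S) (hd : ∀ i j, |d i j| ≤ C₁)
    (hg : ∀ k i j, |g k i j| ≤ h) :
    |∑ i, 2 * b i * -∑ j, d i j * b j
      + ∑ k, ∑ i, 2 * c k i * -∑ j, (d k j * c j i + d i j * c k j + g k i j * b j)|
      ≤ (40 * C₁ + 8) * S + 8 * (h ^ 2 * b 0 ^ 2 + h ^ 2 * b 1 ^ 2) := by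
  have hS : 0 ≤ S := le_trans (sq_nonneg _) (hb 0)
  have hC : 0 ≤ C₁ := le_trans (abs_nonneg _) (hd 0 0)
  have habs : ∀ y z : ℝ, y ^ 2 ≤ S → z ^ 2 ≤ S → |y * z| ≤ S := by
    intro y z hy hz
    rw [abs_le]
    constructor <;> nlinarith [sq_nonneg (y + z), sq_nonneg (y - z)]
  have hprod : ∀ e y z : ℝ, |e| ≤ C₁ → y ^ 2 ≤ S → z ^ 2 ≤ S → |2 * y * (e * z)| ≤ 2 * C₁ * S := by
    intro e y z he hy hz
    have e1 : 2 * y * (e * z) = 2 * (e * (y * z)) := by ring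
    rw [e1, abs_mul, abs_two, abs_mul]
    have := mul_le_mul he (habs y z hy hz) (abs_nonneg _) hC
    linarith
  have hbs : ∀ j, h ^ 2 * b j ^ 2 ≤ h ^ 2 * b 0 ^ 2 + h ^ 2 * b 1 ^ 2 := by
    intro j
    fin_cases j
    · simp; positivity
    · simp; positivity
  have hgp : ∀ k i j, |2 * c k i * (g k i j * b j)|
      ≤ S + (h ^ 2 * b 0 ^ 2 + h ^ 2 * b 1 ^ 2) := by
    intro k i j
    have h1 : (g k i j * b j) ^ 2 ≤ h ^ 2 * b j ^ 2 := by
      rw [mul_pow]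
      exact mul_le_mul_of_nonneg_right (sq_le_sq' (abs_le.1 (hg k i j)).1 (abs_le.1 (hg k i j)).2)
        (sq_nonneg _)
    have h2 := hbs j
    have h3 := hc k i
    rw [abs_le]
    constructor <;> nlinarith [sq_nonneg (c k i + g k i j * b j), sq_nonneg (c k i - g k i j * b j)]
  have A1 : ∀ i j, |2 * b i * (d i j * b j)| ≤ 2 * C₁ * S := fun i j =>
    hprod _ _ _ (hd i j) (hb i) (hb j)
  have A2 : ∀ k i j, |2 * c k i * (d k j * c j i + d i j * c k j + g k i j * b j)|
      ≤ 2 * C₁ * S + 2 * C₁ * S + (S + (h ^ 2 * b 0 ^ 2 + h ^ 2 * b 1 ^ 2)) := by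
    intro k i j
    rw [mul_add, mul_add]
    refine (abs_add_three _ _ _).trans ?_
    exact add_le_add (add_le_add (hprod _ _ _ (hd k j) (hc k i) (hc j i))
      (hprod _ _ _ (hd i j) (hc k i) (hc k j))) (hgp k i j)
  have B1 : |∑ i, 2 * b i * -∑ j, d i j * b j| ≤ ∑ _i : Fin 2, ∑ _j : Fin 2, 2 * C₁ * S := by
    refine (Finset.abs_sum_le_sum_abs _ _).trans (Finset.sum_le_sum fun i _ => ?_)
    rw [mul_neg, abs_neg, Finset.mul_sum]
    exact (Finset.abs_sum_le_sum_abs _ _).trans (Finset.sum_le_sum fun j _ => A1 i j)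
  have B2 : |∑ k, ∑ i, 2 * c k i * -∑ j, (d k j * c j i + d i j * c k j + g k i j * b j)|
      ≤ ∑ _k : Fin 2, ∑ _i : Fin 2, ∑ _j : Fin 2,
        (2 * C₁ * S + 2 * C₁ * S + (S + (h ^ 2 * b 0 ^ 2 + h ^ 2 * b 1 ^ 2))) := by
    refine (Finset.abs_sum_le_sum_abs _ _).trans (Finset.sum_le_sum fun k _ => ?_)
    refine (Finset.abs_sum_le_sum_abs _ _).trans (Finset.sum_le_sum fun i _ => ?_)
    rw [mul_neg, abs_neg, Finset.mul_sum]
    exact (Finset.abs_sum_le_sum_abs _ _).trans (Finset.sum_le_sum fun j _ => A2 k i j)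
  simp only [Finset.sum_const, Finset.card_univ, Fintype.card_fin, nsmul_eq_mul] at B1 B2
  refine (abs_add_le _ _).trans ((add_le_add B1 B2).trans (le_of_eq ?_))
  push_cast; ring

/-- The density `|W|² + |DW|² + |D²W|²` of the squared `H²` norm in space. Components are squared and
summed, which is equivalent to using operator norms and makes each summand smooth. -/
def dens (W : ℝ × Plane → ℝ) : ℝ × Plane → ℝ := fun p =>
  W p ^ 2 + (∑ i, dd (xdir i) W p ^ 2 + ∑ k, ∑ i, dd (xdir k) (dd (xdir i) W) p ^ 2)

theorem dens_continuous {W : ℝ × Plane → ℝ} (hW : ContDiff ℝ (⊤ : ℕ∞) W) :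
    Continuous (dens W) := by
  refine (hW.continuous.pow 2).add ((continuous_finsetSum _ fun i _ => ?_).add
    (continuous_finsetSum _ fun k _ => continuous_finsetSum _ fun i _ => ?_))
  · exact (dd_contDiff hW _).continuous.pow 2
  · exact (dd_contDiff (dd_contDiff hW _) _).continuous.pow 2

theorem sq_le_dens (W : ℝ × Plane → ℝ) (p : ℝ × Plane) : W p ^ 2 ≤ dens W p := by
  unfold dens
  have : 0 ≤ ∑ i, dd (xdir i) W p ^ 2 + ∑ k, ∑ i, dd (xdir k) (dd (xdir i) W) p ^ 2 := by
    positivity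
  linarith

theorem sum_first_le_dens (W : ℝ × Plane → ℝ) (p : ℝ × Plane) :
    ∑ i, dd (xdir i) W p ^ 2 ≤ dens W p := by
  unfold dens
  have : 0 ≤ W p ^ 2 + ∑ k, ∑ i, dd (xdir k) (dd (xdir i) W) p ^ 2 := by
    positivity
  linarith

theorem sum_second_le_dens (W : ℝ × Plane → ℝ) (p : ℝ × Plane) :
    ∑ k, ∑ i, dd (xdir k) (dd (xdir i) W) p ^ 2 ≤ dens W p := by
  unfold dens
  have : 0 ≤ W p ^ 2 + ∑ i, dd (xdir i) W p ^ 2 := by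
    positivity
  linarith

theorem first_sq_le_dens (W : ℝ × Plane → ℝ) (p : ℝ × Plane) (i : Fin 2) :
    dd (xdir i) W p ^ 2 ≤ dens W p :=
  (Finset.single_le_sum (f := fun i => dd (xdir i) W p ^ 2) (fun _ _ => sq_nonneg _)
    (Finset.mem_univ i)).trans (sum_first_le_dens W p)

theorem second_sq_le_dens (W : ℝ × Plane → ℝ) (p : ℝ × Plane) (k i : Fin 2) :
    dd (xdir k) (dd (xdir i) W) p ^ 2 ≤ dens W p :=
  ((Finset.single_le_sum (f := fun i => dd (xdir k) (dd (xdir i) W) p ^ 2)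
      (fun _ _ => sq_nonneg _) (Finset.mem_univ i)).trans
    (Finset.single_le_sum (f := fun k => ∑ i, dd (xdir k) (dd (xdir i) W) p ^ 2)
      (fun _ _ => by positivity) (Finset.mem_univ k))).trans (sum_second_le_dens W p)

theorem dd_vanish {F : ℝ × Plane → ℝ} (hF : ContDiff ℝ (⊤ : ℕ∞) F) {t R : ℝ}
    (h : ∀ x : Plane, R ≤ ‖x‖ → F (t, x) = 0) (i : Fin 2) (x : Plane) (hx : R < ‖x‖) :
    dd (xdir i) F (t, x) = 0 := by
  have h1 : (fun y => F (t, y)) =ᶠ[nhds x] fun _ => 0 := by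
    filter_upwards [(isOpen_lt continuous_const continuous_norm).mem_nhds hx] with y hy
    exact h y (le_of_lt hy)
  rw [xdir, ← fderiv_slice hF, h1.fderiv_eq]
  simp

theorem plane_eq (x : Plane) :
    x = x 0 • EuclideanSpace.single 0 (1:ℝ) + x 1 • EuclideanSpace.single 1 (1:ℝ) := by
  ext i; fin_cases i <;> simp

theorem clm_norm_le {G : Type*} [NormedAddCommGroup G] [NormedSpace ℝ G] (L : Plane →L[ℝ] G) :
    ‖L‖ ≤ ‖L (EuclideanSpace.single 0 1)‖ + ‖L (EuclideanSpace.single 1 1)‖ := by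
  refine L.opNorm_le_bound (by positivity) fun x => ?_
  have h0 := PiLp.norm_apply_le x 0
  have h1 := PiLp.norm_apply_le x 1
  conv_lhs => rw [plane_eq x]
  rw [map_add, map_smul, map_smul]
  refine (norm_add_le _ _).trans ?_
  rw [norm_smul, norm_smul, add_mul, mul_comm, mul_comm ‖x 1‖]
  gcongr

theorem integral_split {μ : Measure Plane} {a : Plane → ℝ} {b : Fin 2 → Plane → ℝ}
    {c : Fin 2 → Fin 2 → Plane → ℝ} (ha : Integrable a μ) (hb : ∀ i, Integrable (b i) μ)
    (hc : ∀ k i, Integrable (c k i) μ) :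
    ∫ x, (a x + (∑ i, b i x + ∑ k, ∑ i, c k i x)) ∂μ
      = (∫ x, a x ∂μ) + (∑ i, ∫ x, b i x ∂μ + ∑ k, ∑ i, ∫ x, c k i x ∂μ) := by
  have h1 : Integrable (fun x => ∑ i, b i x) μ := integrable_finsetSum _ fun i _ => hb i
  have h2 (k : Fin 2) : Integrable (fun x => ∑ i, c k i x) μ :=
    integrable_finsetSum _ fun i _ => hc k i
  have h3 : Integrable (fun x => ∑ k, ∑ i, c k i x) μ := integrable_finsetSum _ fun k _ => h2 k
  have h4 : Integrable (fun x => ∑ i, b i x + ∑ k, ∑ i, c k i x) μ := h1.add h3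
  rw [integral_add ha h4, integral_add h1 h3, integral_finsetSum _ fun i _ => hb i,
    integral_finsetSum _ fun k _ => h2 k]
  congr 2
  exact Finset.sum_congr rfl fun k _ => integral_finsetSum _ fun i _ => hc k i

/-- The energy identity summed over `W` and its derivatives up to order two. The gap between `R`
and the outer radius leaves room for the derivatives of `W` to vanish up to the boundary of the larger ball. -/
theorem integral_dens_hasDerivAt {U : Fin 2 → ℝ × Plane → ℝ}
    (hU : ∀ j, ContDiff ℝ (⊤ : ℕ∞) (U j))
    (hdiv : ∀ p, ∑ j, dd (xdir j) (U j) p = 0)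
    {W : ℝ × Plane → ℝ} (hW : ContDiff ℝ (⊤ : ℕ∞) W) {R R' t : ℝ} (hRR : R < R')
    (hs : ∀ x : Plane, R ≤ ‖x‖ → W (t, x) = 0) :
    HasDerivAt (fun s => ∫ x in Metric.closedBall (0 : Plane) R', dens W (s, x))
      (∫ x in Metric.closedBall (0 : Plane) R', (2 * W (t, x) * transp U W (t, x)
        + (∑ i, 2 * dd (xdir i) W (t, x) * transp U (dd (xdir i) W) (t, x)
        + ∑ k, ∑ i, 2 * dd (xdir k) (dd (xdir i) W) (t, x)
            * transp U (dd (xdir k) (dd (xdir i) W)) (t, x)))) t := by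
  have hs0 : ∀ x : Plane, R' ≤ ‖x‖ → W (t, x) = 0 := fun x hx => hs x (hRR.le.trans hx)
  have hs1 : ∀ i, ∀ x : Plane, (R + R') / 2 ≤ ‖x‖ → dd (xdir i) W (t, x) = 0 :=
    fun i x hx => dd_vanish hW hs i x (by linarith)
  have hs2 : ∀ k i, ∀ x : Plane, R' ≤ ‖x‖ → dd (xdir k) (dd (xdir i) W) (t, x) = 0 :=
    fun k i x hx => dd_vanish (dd_contDiff hW _) (hs1 i) k x (by linarith)
  have hD1 (i : Fin 2) := dd_contDiff hW (xdir i)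
  have hD2 (k i : Fin 2) := dd_contDiff (hD1 i) (xdir k)
  have d0 := energy_deriv hU hdiv hW hs0
  have d1 (i : Fin 2) := energy_deriv hU hdiv (hD1 i) (R := R')
    (fun x hx => hs1 i x (by linarith))
  have d2 (k i : Fin 2) := energy_deriv hU hdiv (hD2 k i) (hs2 k i)
  have hall := d0.add ((HasDerivAt.fun_sum (u := Finset.univ) fun i _ => d1 i).add
    (HasDerivAt.fun_sum (u := Finset.univ) fun k _ =>
      HasDerivAt.fun_sum (u := Finset.univ) fun i _ => d2 k i))
  have i0 : ∀ F : ℝ × Plane → ℝ, ContDiff ℝ (⊤ : ℕ∞) F → ∀ s,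
      IntegrableOn (fun x => F (s, x) ^ 2) (Metric.closedBall 0 R') :=
    fun F hF s => integrableOn_slice (hF.continuous.pow 2) s R'
  have hcont : ∀ F : ℝ × Plane → ℝ, ContDiff ℝ (⊤ : ℕ∞) F →
      IntegrableOn (fun x => 2 * F (t, x) * transp U F (t, x)) (Metric.closedBall 0 R') :=
    fun F hF => integrableOn_slice (G := fun p => 2 * F p * transp U F p)
      ((continuous_const.mul hF.continuous).mul (transp_contDiff hU hF).continuous) t R'
  have e1 := funext fun s =>
    integral_split (i0 W hW s) (fun i => i0 _ (hD1 i) s) (fun k i => i0 _ (hD2 k i) s)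
  have e2 := integral_split (hcont W hW) (fun i => hcont _ (hD1 i)) (fun k i => hcont _ (hD2 k i))
  simp only [dens]
  rw [e1, e2]
  exact hall

/-! ### Growth of the energy -/

/-- The squared `H²` norm, in the componentwise version of `dens`, of the slice of `W` at time `t`
over the ball of radius `R`. -/
def energy (W : ℝ × Plane → ℝ) (R t : ℝ) : ℝ :=
  ∫ x in Metric.closedBall (0 : Plane) R, dens W (t, x)

theorem dens_nonneg (W : ℝ × Plane → ℝ) (p : ℝ × Plane) : 0 ≤ dens W p :=
  (sq_nonneg _).trans (sq_le_dens W p)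

theorem energy_nonneg (W : ℝ × Plane → ℝ) (R t : ℝ) : 0 ≤ energy W R t :=
  integral_nonneg fun _ => dens_nonneg W _

/-- The majorant of `|f| |Df|` needed in `exists_ladyzhenskaya` for `f = ∂ⱼW`. -/
theorem abs_mul_gradient_le_dens {W : ℝ × Plane → ℝ} (hW : ContDiff ℝ (⊤ : ℕ∞) W) (t : ℝ)
    (j : Fin 2) (x : Plane) :
    |dd (xdir j) W (t, x)| * ‖fderiv ℝ (fun y => dd (xdir j) W (t, y)) x‖ ≤ 2 * dens W (t, x) := by
  have h1 := clm_norm_le (fderiv ℝ (fun y => dd (xdir j) W (t, y)) x)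
  rw [fderiv_slice (dd_contDiff hW _), fderiv_slice (dd_contDiff hW _), ← xdir, ← xdir,
    Real.norm_eq_abs, Real.norm_eq_abs] at h1
  have hb := first_sq_le_dens W (t, x) j
  have h2 : ∀ k, |dd (xdir j) W (t, x)| * |dd (xdir k) (dd (xdir j) W) (t, x)| ≤ dens W (t, x) := by
    intro k
    have hc := second_sq_le_dens W (t, x) k j
    rw [← sq_abs] at hb hc
    nlinarith [sq_nonneg (|dd (xdir j) W (t, x)| - |dd (xdir k) (dd (xdir j) W) (t, x)|)]
  calc _ ≤ |dd (xdir j) W (t, x)| * _ := mul_le_mul_of_nonneg_left h1 (abs_nonneg _)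
    _ ≤ _ := by rw [mul_add]; linarith [h2 0, h2 1]

/-- Grönwall's estimate for the energy. The function `h` bounds `|D²U|`, and `hH` is its `L⁴` bound;
the dangerous term is `∫ h² |DW|² ≤ ‖h‖₄² ‖DW‖₄²`, and by `hL` the factor `‖DW‖₄²` is at most a
multiple of `∫ |DW| |D²W|`, hence of the energy itself. The differential inequality is therefore
linear. -/
theorem energy_growth {K₀ C₁ : ℝ} (hK₀ : 0 ≤ K₀)
    (hL : ∀ (f m : Plane → ℝ) (R : ℝ),
      ContDiff ℝ 1 f → (∀ x, R ≤ ‖x‖ → f x = 0) → Continuous m →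
      (∀ x, |f x| * ‖fderiv ℝ f x‖ ≤ m x) →
      ∫ x in Metric.closedBall (0 : Plane) R, f x ^ 4
        ≤ K₀ * (∫ x in Metric.closedBall (0 : Plane) R, m x) ^ 2)
    {U : Fin 2 → ℝ × Plane → ℝ} (hU : ∀ j, ContDiff ℝ (⊤ : ℕ∞) (U j))
    (hdiv : ∀ p, ∑ j, dd (xdir j) (U j) p = 0)
    {W : ℝ × Plane → ℝ} (hW : ContDiff ℝ (⊤ : ℕ∞) W)
    (hT : ∀ t ∈ Icc (0:ℝ) 1, ∀ x, transp U W (t, x) = 0) {R R' : ℝ} (hRR : R < R')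
    (hs : ∀ t ∈ Icc (0:ℝ) 1, ∀ x : Plane, R ≤ ‖x‖ → W (t, x) = 0)
    {h : ℝ → Plane → ℝ} (hh : ∀ t, Continuous (h t))
    (hd : ∀ t ∈ Icc (0:ℝ) 1, ∀ x i j, |dd (xdir i) (U j) (t, x)| ≤ C₁)
    (hg : ∀ t ∈ Icc (0:ℝ) 1, ∀ x k i j, |dd (xdir k) (dd (xdir i) (U j)) (t, x)| ≤ h t x)
    (hH : ∀ t ∈ Icc (0:ℝ) 1, ∫ x in Metric.closedBall (0 : Plane) R', h t x ^ 4 ≤ C₁ ^ 4)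
    {t : ℝ} (ht : t ∈ Icc (0:ℝ) 1) :
    energy W R' t ≤ energy W R' 0 * Real.exp (40 * C₁ + 8 + 32 * C₁ ^ 2 * √K₀) := by
  have hC₁ : 0 ≤ C₁ := (abs_nonneg _).trans (hd 0 (by simp) 0 0 0)
  set K := 40 * C₁ + 8 + 32 * C₁ ^ 2 * √K₀ with hK
  have hK' : 0 ≤ K := by positivity
  have hder : ∀ s ∈ Icc (0:ℝ) 1, HasDerivAt (energy W R') _ s := fun s hs' =>
    integral_dens_hasDerivAt hU hdiv hW hRR (hs s hs')
  have hbound : ∀ s ∈ Icc (0:ℝ) 1, ‖∫ x in Metric.closedBall (0 : Plane) R',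
      (2 * W (s, x) * transp U W (s, x)
        + (∑ i, 2 * dd (xdir i) W (s, x) * transp U (dd (xdir i) W) (s, x)
        + ∑ k, ∑ i, 2 * dd (xdir k) (dd (xdir i) W) (s, x)
            * transp U (dd (xdir k) (dd (xdir i) W)) (s, x)))‖ ≤ K * ‖energy W R' s‖ + 0 := by
    intro s hs'
    have hint1 : IntegrableOn (fun x => dens W (s, x)) (Metric.closedBall 0 R') :=
      integrableOn_slice (dens_continuous hW) s R'
    have hcb (j : Fin 2) : Continuous fun x => dd (xdir j) W (s, x) :=
      (dd_contDiff hW (xdir j)).continuous.comp (by fun_prop : Continuous fun x : Plane => (s, x))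
    have hint2 (j : Fin 2) : IntegrableOn (fun x => h s x ^ 2 * dd (xdir j) W (s, x) ^ 2)
        (Metric.closedBall 0 R') :=
      (((hh s).pow 2).mul ((hcb j).pow 2)).continuousOn.integrableOn_compact
        (isCompact_closedBall _ _)
    have hE := energy_nonneg W R' s
    have hb (j : Fin 2) : ∫ x in Metric.closedBall (0 : Plane) R',
        h s x ^ 2 * dd (xdir j) W (s, x) ^ 2 ≤ C₁ ^ 2 * (√K₀ * (2 * energy W R' s)) := by
      refine setIntegral_sq_mul_sq_le (hh s) (hcb j) (by positivity) (by positivity)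
        ((hH s hs').trans (le_of_eq (by ring))) ?_
      have := hL (fun x => dd (xdir j) W (s, x)) (fun x => 2 * dens W (s, x)) R'
        ((slice_contDiff (dd_contDiff hW (xdir j)) s).of_le (by simp))
        (fun x hx => dd_vanish hW (hs s hs') j x (by linarith))
        (continuous_const.mul ((dens_continuous hW).comp
          (by fun_prop : Continuous fun x : Plane => (s, x))))
        (fun x => abs_mul_gradient_le_dens hW s j x)
      rw [integral_const_mul] at this
      rw [mul_pow, Real.sq_sqrt hK₀]
      exact this
    have hpt : ∀ x, ‖2 * W (s, x) * transp U W (s, x)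
        + (∑ i, 2 * dd (xdir i) W (s, x) * transp U (dd (xdir i) W) (s, x)
        + ∑ k, ∑ i, 2 * dd (xdir k) (dd (xdir i) W) (s, x)
            * transp U (dd (xdir k) (dd (xdir i) W)) (s, x))‖
        ≤ (40 * C₁ + 8) * dens W (s, x) + 8 * (h s x ^ 2 * dd (xdir 0) W (s, x) ^ 2
          + h s x ^ 2 * dd (xdir 1) W (s, x) ^ 2) := by
      intro x
      simp only [hT s hs' x, transp_first hU hW (hT s hs'), transp_second hU hW (hT s hs'),
        mul_zero, zero_add, Real.norm_eq_abs]
      exact commutator_bound (fun i => dd (xdir i) W (s, x))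
        (fun k i => dd (xdir k) (dd (xdir i) W) (s, x)) (fun i j => dd (xdir i) (U j) (s, x))
        (fun k i j => dd (xdir k) (dd (xdir i) (U j)) (s, x)) (first_sq_le_dens W (s, x))
        (second_sq_le_dens W (s, x)) (hd s hs' x) (hg s hs' x)
    have hint3 : IntegrableOn (fun x => h s x ^ 2 * dd (xdir 0) W (s, x) ^ 2
          + h s x ^ 2 * dd (xdir 1) W (s, x) ^ 2) (Metric.closedBall 0 R') :=
      (hint2 0).add (hint2 1)
    refine (norm_integral_le_of_norm_le ((hint1.const_mul _).add (hint3.const_mul 8))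
      (ae_of_all _ hpt)).trans ?_
    simp only [Pi.add_apply]
    rw [integral_add (hint1.const_mul _) (hint3.const_mul 8), integral_const_mul,
      integral_const_mul, integral_add (hint2 0) (hint2 1), Real.norm_of_nonneg hE]
    have h0 := hb 0
    have h1 := hb 1
    change (40 * C₁ + 8) * energy W R' s + _ ≤ _
    rw [hK]
    linarith
  have := norm_le_gronwallBound_of_norm_deriv_right_le (f := energy W R') (a := 0) (b := 1)
    (fun s hs' => (hder s hs').continuousAt.continuousWithinAt)
    (fun s hs' => (hder s ⟨hs'.1, hs'.2.le⟩).hasDerivWithinAt) (le_refl _)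
    (fun s hs' => hbound s ⟨hs'.1, hs'.2.le⟩) t ht
  rw [gronwallBound_ε0, Real.norm_of_nonneg (energy_nonneg _ _ _),
    Real.norm_of_nonneg (energy_nonneg _ _ _), sub_zero] at this
  refine this.trans (mul_le_mul_of_nonneg_left (Real.exp_le_exp.2 ?_) (energy_nonneg _ _ _))
  nlinarith [ht.2]

/-- Passage from an `L^p` seminorm on the plane to the integral of a power over a ball. -/
theorem setIntegral_pow_le {G : Type*} [NormedAddCommGroup G] {g : Plane → G} {f : Plane → ℝ}
    (hf : Continuous f) (hfg : ∀ x, |f x| ≤ ‖g x‖) {p : ℕ} (hp : p ≠ 0) (hpe : Even p) {M R : ℝ}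
    (hM : 0 ≤ M) (hg : eLpNorm g p volume ≤ ENNReal.ofReal M) :
    ∫ x in Metric.closedBall (0 : Plane) R, f x ^ p ≤ M ^ p := by
  have hpp : (0:ℝ) < p := by positivity
  have h1 : ENNReal.ofReal (∫ x in Metric.closedBall (0 : Plane) R, f x ^ p)
      ≤ ENNReal.ofReal (M ^ p) := by
    calc _ = ∫⁻ x in Metric.closedBall (0 : Plane) R, ENNReal.ofReal (f x ^ p) :=
          ofReal_integral_eq_lintegral_ofReal
            ((hf.pow p).continuousOn.integrableOn_compact (isCompact_closedBall _ _))
            (ae_of_all _ fun x => hpe.pow_nonneg _)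
      _ ≤ ∫⁻ x, ENNReal.ofReal (f x ^ p) := setLIntegral_le_lintegral _ _
      _ ≤ ∫⁻ x, ‖g x‖ₑ ^ (p:ℝ) := by
          refine lintegral_mono fun x => ?_
          simp only
          rw [← ofReal_norm, ENNReal.ofReal_rpow_of_nonneg (norm_nonneg _) hpp.le,
            Real.rpow_natCast, ← hpe.pow_abs]
          exact ENNReal.ofReal_le_ofReal (pow_le_pow_left₀ (abs_nonneg _) (hfg x) p)
      _ = (eLpNorm g p volume) ^ (p:ℝ) := by
          rw [eLpNorm_eq_lintegral_rpow_enorm_toReal (by exact_mod_cast hp) (by simp),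
            ENNReal.toReal_natCast, ← ENNReal.rpow_mul, one_div, inv_mul_cancel₀ hpp.ne',
            ENNReal.rpow_one]
      _ ≤ (ENNReal.ofReal M) ^ (p:ℝ) := by gcongr
      _ = _ := by rw [ENNReal.ofReal_rpow_of_nonneg hM hpp.le, Real.rpow_natCast]
  exact (ENNReal.ofReal_le_ofReal_iff (by positivity)).1 h1

/-- Passage from an integral over a ball to the `L²` seminorm of a function supported there. -/
theorem eLpNorm_two_toReal_le {G : Type*} [NormedAddCommGroup G] {g : Plane → G} {q : Plane → ℝ}
    {R : ℝ} (hq : Continuous q) (hgq : ∀ x, ‖g x‖ ^ 2 ≤ q x) (hg : ∀ x, R < ‖x‖ → g x = 0) :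
    (eLpNorm g 2 volume).toReal ≤ √(∫ x in Metric.closedBall (0 : Plane) R, q x) := by
  have hI : 0 ≤ ∫ x in Metric.closedBall (0 : Plane) R, q x :=
    integral_nonneg fun x => (sq_nonneg _).trans (hgq x)
  refine ENNReal.toReal_le_of_le_ofReal (Real.sqrt_nonneg _) ?_
  rw [eLpNorm_eq_lintegral_rpow_enorm_toReal (by simp) (by simp), ENNReal.toReal_ofNat,
    Real.sqrt_eq_rpow, ← ENNReal.ofReal_rpow_of_nonneg hI (by norm_num)]
  refine ENNReal.rpow_le_rpow ?_ (by norm_num)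
  rw [ofReal_integral_eq_lintegral_ofReal
    (hq.continuousOn.integrableOn_compact (isCompact_closedBall _ _))
    (ae_of_all _ fun x => (sq_nonneg _).trans (hgq x)),
    ← lintegral_indicator Metric.isClosed_closedBall.measurableSet]
  refine lintegral_mono fun x => ?_
  simp only
  by_cases hx : x ∈ Metric.closedBall (0 : Plane) R
  · rw [indicator_of_mem hx, ← ofReal_norm, ENNReal.ofReal_rpow_of_nonneg (norm_nonneg _)
      (by norm_num), Real.rpow_two]
    exact ENNReal.ofReal_le_ofReal (hgq x)
  · rw [mem_closedBall_zero_iff, not_le] at hx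
    rw [hg x hx]
    simp

/-! ### Comparison with the Sobolev norm -/

theorem fderiv_fderiv_slice {G : Type*} [NormedAddCommGroup G] [NormedSpace ℝ G]
    {F : ℝ × Plane → G} (hF : ContDiff ℝ (⊤ : ℕ∞) F) (t : ℝ) (x : Plane) (k i : Fin 2) :
    fderiv ℝ (fderiv ℝ (fun y => F (t, y))) x (EuclideanSpace.single k 1)
      (EuclideanSpace.single i 1) = dd (xdir k) (dd (xdir i) F) (t, x) := by
  have hd : Differentiable ℝ (fderiv ℝ (fun y => F (t, y))) :=
    ((slice_contDiff hF t).fderiv_right (m := (⊤ : ℕ∞)) (by simp)).differentiable (by simp)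
  rw [xdir, ← fderiv_slice (dd_contDiff hF _)]
  have h1 : (fun y => dd (xdir i) F (t, y))
      = fun y => fderiv ℝ (fun y => F (t, y)) y (EuclideanSpace.single i 1) := by
    funext y
    rw [fderiv_slice hF, xdir]
  rw [h1, ((hd x).hasFDerivAt.clm_apply (hasFDerivAt_const _ x)).fderiv]
  simp

theorem dd_coord {F : ℝ × Plane → Plane} (hF : ContDiff ℝ (⊤ : ℕ∞) F) (v : ℝ × Plane)
    (j : Fin 2) : dd v (fun p => F p j) = fun p => dd v F p j := by
  funext p
  have h := ((EuclideanSpace.proj (𝕜 := ℝ) j).hasFDerivAt.comp p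
    (hF.differentiable (by simp) p).hasFDerivAt).fderiv
  change fderiv ℝ ((EuclideanSpace.proj (𝕜 := ℝ) j) ∘ F) p v = _
  rw [h]
  simp [dd]

theorem single_norm (i : Fin 2) : ‖(EuclideanSpace.single i (1:ℝ) : Plane)‖ = 1 := by simp

/-- A solution with compactly supported data stays supported in one ball for all `t ∈ [0,1]`: since
`Du` is bounded, `|u(t,x)| ≤ M + C₁|x|`, so that `vanish_outside` applies. -/
theorem exists_uniform_support {u : ℝ → Plane → Plane} {W : ℝ × Plane → ℝ}
    (hu : ContDiff ℝ (⊤ : ℕ∞) (fun p : ℝ × Plane => u p.1 p.2))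
    (hW : ContDiff ℝ (⊤ : ℕ∞) W)
    (hT : ∀ t ∈ Icc (0:ℝ) 1, ∀ x, transp (fun j p => u p.1 p.2 j) W (t, x) = 0)
    {C₁ : ℝ} (hC₁ : 0 ≤ C₁) (hd : ∀ t ∈ Icc (0:ℝ) 1, ∀ x, ‖fderiv ℝ (u t) x‖ ≤ C₁)
    (h0 : HasCompactSupport fun x => W (0, x)) :
    ∃ R : ℝ, ∀ t ∈ Icc (0:ℝ) 1, ∀ x : Plane, R ≤ ‖x‖ → W (t, x) = 0 := by
  obtain ⟨M, hM⟩ := isCompact_Icc.exists_bound_of_continuousOn (s := Icc (0:ℝ) 1)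
    (f := fun t => u t 0) (hu.continuous.comp (by fun_prop : Continuous fun t : ℝ =>
      (t, (0 : Plane)))).continuousOn
  have hM0 : 0 ≤ M := (norm_nonneg _).trans (hM 0 (by simp))
  obtain ⟨ρ, hρ⟩ := h0.isCompact.isBounded.subset_closedBall (0 : Plane)
  -- The bound on `Du` makes `u` grow at most linearly, uniformly for `t ∈ [0,1]`.
  have hgrow : ∀ t ∈ Icc (0:ℝ) 1, ∀ x, ‖u t x‖ ≤ M + C₁ * ‖x‖ := by
    intro t ht x
    have h1 := Convex.norm_image_sub_le_of_norm_fderiv_le (𝕜 := ℝ) (f := u t) (s := univ)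
      (x := 0) (y := x)
      (fun y _ => (slice_contDiff hu t).differentiable (by simp) y) (fun y _ => hd t ht y)
      convex_univ (mem_univ _) (mem_univ _)
    rw [sub_zero] at h1
    have h2 := norm_le_norm_add_norm_sub' (u t x) (u t 0)
    linarith [hM t ht]
  have hK : ∀ t ∈ Icc (0:ℝ) 1, ∀ x : Plane,
      2 * |x 0 * u t x 0 + x 1 * u t x 1| < (M + 2 * C₁ + 1) * wt x := by
    intro t ht x
    have h1 : |x 0 * u t x 0 + x 1 * u t x 1| ≤ ‖x‖ * ‖u t x‖ := by
      have := abs_real_inner_le_norm x (u t x)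
      rw [PiLp.inner_apply, Fin.sum_univ_two] at this
      simpa [mul_comm] using this
    have h2 := mul_le_mul_of_nonneg_left (hgrow t ht x) (norm_nonneg x)
    rw [wt_eq]
    nlinarith [mul_nonneg hM0 (sq_nonneg (‖x‖ - 1)), sq_nonneg ‖x‖]
  have hA : ∀ x : Plane, 2 + ρ ^ 2 ≤ wt x → W (0, x) = 0 := by
    intro x hx
    by_contra hne
    have h1 : x ∈ Metric.closedBall (0 : Plane) ρ :=
      hρ (subset_tsupport _ (Function.mem_support.2 hne))
    rw [mem_closedBall_zero_iff] at h1
    rw [wt_eq] at hx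
    nlinarith [norm_nonneg x]
  have hK0 : 0 ≤ M + 2 * C₁ + 1 := by positivity
  refine ⟨(2 + ρ ^ 2) * Real.exp (M + 2 * C₁ + 1), fun t ht x hx =>
    vanish_outside hW hT hK0 hK hA ht x ?_⟩
  have h1 : ‖x‖ ≤ wt x := by
    rw [wt_eq]
    nlinarith [sq_nonneg (‖x‖ - 1), norm_nonneg x]
  have h2 : Real.exp (-(M + 2 * C₁ + 1)) ≤ Real.exp (-((M + 2 * C₁ + 1) * t)) := by
    apply Real.exp_le_exp.2
    nlinarith [ht.1, ht.2]
  calc 2 + ρ ^ 2 = (2 + ρ ^ 2) * Real.exp (M + 2 * C₁ + 1) * Real.exp (-(M + 2 * C₁ + 1)) := by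
        rw [mul_assoc, ← Real.exp_add]
        simp
    _ ≤ wt x * Real.exp (-(M + 2 * C₁ + 1)) := by gcongr; exact hx.trans h1
    _ ≤ _ := mul_le_mul_of_nonneg_left h2 ((norm_nonneg x).trans h1)

/-- For continuous compactly supported functions the seminorm is finite, so the value
`∞.toReal = 0` does not occur in `h2Norm`. -/
theorem eLpNorm_two_le_of_toReal {G : Type*} [NormedAddCommGroup G] {g : Plane → G}
    (hg : Continuous g) (hs : HasCompactSupport g) {B : ℝ}
    (h : (eLpNorm g 2 volume).toReal ≤ B) : eLpNorm g 2 volume ≤ ENNReal.ofReal B := by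
  rw [← ENNReal.ofReal_toReal (hg.memLp_of_hasCompactSupport (μ := volume) (p := 2) hs).2.ne]
  exact ENNReal.ofReal_le_ofReal h

theorem abs_first_le {W : ℝ × Plane → ℝ} (hW : ContDiff ℝ (⊤ : ℕ∞) W) (t : ℝ) (x : Plane)
    (i : Fin 2) : |dd (xdir i) W (t, x)| ≤ ‖fderiv ℝ (fun y => W (t, y)) x‖ := by
  rw [xdir, ← fderiv_slice hW, ← Real.norm_eq_abs]
  simpa using (fderiv ℝ (fun y => W (t, y)) x).le_opNorm (EuclideanSpace.single i 1)

theorem norm_second_le {G : Type*} [NormedAddCommGroup G] [NormedSpace ℝ G]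
    {F : ℝ × Plane → G} (hF : ContDiff ℝ (⊤ : ℕ∞) F) (t : ℝ) (x : Plane) (k i : Fin 2) :
    ‖dd (xdir k) (dd (xdir i) F) (t, x)‖ ≤ ‖fderiv ℝ (fderiv ℝ (fun y => F (t, y))) x‖ := by
  rw [← fderiv_fderiv_slice hF]
  simpa using (fderiv ℝ (fderiv ℝ (fun y => F (t, y))) x).le_opNorm₂
    (EuclideanSpace.single k 1) (EuclideanSpace.single i 1)

/-- The energy has `1 + 2 + 4` summands, each bounded by the squared `H²` norm. -/
theorem energy_le_of_h2Norm_le {W : ℝ × Plane → ℝ} (hW : ContDiff ℝ (⊤ : ℕ∞) W) {t B R : ℝ}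
    (hs : HasCompactSupport fun x => W (t, x)) (hB : 0 ≤ B)
    (h : h2Norm (fun x => W (t, x)) ≤ B) : energy W R t ≤ 7 * B ^ 2 := by
  have hf := slice_contDiff hW t
  have hf1 : ContDiff ℝ (⊤ : ℕ∞) (fderiv ℝ fun x => W (t, x)) := hf.fderiv_right (by simp)
  have hf2 : ContDiff ℝ (⊤ : ℕ∞) (fderiv ℝ (fderiv ℝ fun x => W (t, x))) :=
    hf1.fderiv_right (by simp)
  have n0 : 0 ≤ (eLpNorm (fun x => W (t, x)) 2 volume).toReal := ENNReal.toReal_nonneg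
  have n1 : 0 ≤ (eLpNorm (fderiv ℝ fun x => W (t, x)) 2 volume).toReal := ENNReal.toReal_nonneg
  have n2 : 0 ≤ (eLpNorm (fderiv ℝ (fderiv ℝ fun x => W (t, x))) 2 volume).toReal :=
    ENNReal.toReal_nonneg
  change _ + (eLpNorm (fderiv ℝ fun x => W (t, x)) 2 volume).toReal
    + (eLpNorm (fderiv ℝ (fderiv ℝ fun x => W (t, x))) 2 volume).toReal ≤ B at h
  have e0 := eLpNorm_two_le_of_toReal hf.continuous hs (B := B) (by linarith)
  have e1 := eLpNorm_two_le_of_toReal hf1.continuous (hs.fderiv ℝ) (B := B) (by linarith)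
  have e2 := eLpNorm_two_le_of_toReal hf2.continuous ((hs.fderiv ℝ).fderiv ℝ) (B := B)
    (by linarith)
  have c1 (i : Fin 2) := dd_contDiff hW (xdir i)
  have c2 (k i : Fin 2) := dd_contDiff (c1 i) (xdir k)
  have I0 : ∫ x in Metric.closedBall (0 : Plane) R, W (t, x) ^ 2 ≤ B ^ 2 :=
    setIntegral_pow_le hf.continuous (fun x => le_rfl) two_ne_zero even_two hB
      (by exact_mod_cast e0)
  have I1 (i : Fin 2) :
      ∫ x in Metric.closedBall (0 : Plane) R, dd (xdir i) W (t, x) ^ 2 ≤ B ^ 2 :=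
    setIntegral_pow_le (slice_contDiff (c1 i) t).continuous (fun x => abs_first_le hW t x i)
      two_ne_zero even_two hB (by exact_mod_cast e1)
  have I2 (k i : Fin 2) :
      ∫ x in Metric.closedBall (0 : Plane) R, dd (xdir k) (dd (xdir i) W) (t, x) ^ 2 ≤ B ^ 2 :=
    setIntegral_pow_le (slice_contDiff (c2 k i) t).continuous
      (fun x => norm_second_le hW t x k i) two_ne_zero even_two hB (by exact_mod_cast e2)
  have hsplit := integral_split (μ := volume.restrict (Metric.closedBall (0 : Plane) R))
    (a := fun x => W (t, x) ^ 2) (b := fun i x => dd (xdir i) W (t, x) ^ 2)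
    (c := fun k i x => dd (xdir k) (dd (xdir i) W) (t, x) ^ 2)
    (integrableOn_slice (G := fun p => W p ^ 2) (hW.continuous.pow 2) t R)
    (fun i => integrableOn_slice (G := fun p => dd (xdir i) W p ^ 2) ((c1 i).continuous.pow 2) t R)
    (fun k i => integrableOn_slice (G := fun p => dd (xdir k) (dd (xdir i) W) p ^ 2)
      ((c2 k i).continuous.pow 2) t R)
  have he : energy W R t = _ := hsplit
  rw [he]
  simp only [Fin.sum_univ_two]
  linarith [I1 0, I1 1, I2 0 0, I2 0 1, I2 1 0, I2 1 1]

/-- Each of the three terms of `h2Norm` is at most `√(4 · energy)`; the factor `4` comes from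
bounding the operator norm of `D²W` by the sum of its four entries. -/
theorem h2Norm_le_of_energy {W : ℝ × Plane → ℝ} (hW : ContDiff ℝ (⊤ : ℕ∞) W) {t R R' : ℝ}
    (hRR : R < R') (hs : ∀ x : Plane, R ≤ ‖x‖ → W (t, x) = 0) :
    h2Norm (fun x => W (t, x)) ≤ 3 * √(4 * energy W R' t) := by
  have hq : Continuous fun x => 4 * dens W (t, x) :=
    continuous_const.mul ((dens_continuous hW).comp (by fun_prop))
  have hE : ∫ x in Metric.closedBall (0 : Plane) R', 4 * dens W (t, x) = 4 * energy W R' t := by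
    rw [integral_const_mul, energy]
  have hev : ∀ x : Plane, R' < ‖x‖ → (fun x => W (t, x)) =ᶠ[nhds x] fun _ => 0 := by
    intro x hx
    filter_upwards [continuous_norm.continuousAt.eventually (lt_mem_nhds hx)] with y hy
    exact hs y (hRR.trans hy).le
  have b0 := eLpNorm_two_toReal_le (g := fun x => W (t, x)) (R := R') hq
    (fun x => by
      have := sq_le_dens W (t, x)
      rw [Real.norm_eq_abs, sq_abs]
      nlinarith [sq_nonneg (W (t, x))])
    (fun x hx => (hev x hx).self_of_nhds)
  have b1 := eLpNorm_two_toReal_le (g := fderiv ℝ fun x => W (t, x)) (R := R') hq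
    (fun x => by
      have h1 := clm_norm_le (fderiv ℝ (fun y => W (t, y)) x)
      rw [fderiv_slice hW, fderiv_slice hW, ← xdir, ← xdir, Real.norm_eq_abs,
        Real.norm_eq_abs] at h1
      have h2 := sum_first_le_dens W (t, x)
      rw [Fin.sum_univ_two, ← sq_abs, ← sq_abs (dd (xdir 1) W (t, x))] at h2
      have h3 := pow_le_pow_left₀ (norm_nonneg _) h1 2
      nlinarith [sq_nonneg (|dd (xdir 0) W (t, x)| - |dd (xdir 1) W (t, x)|),
        dens_nonneg W (t, x)])
    (fun x hx => by simpa using (hev x hx).fderiv_eq (𝕜 := ℝ))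
  have b2 := eLpNorm_two_toReal_le (g := fderiv ℝ (fderiv ℝ fun x => W (t, x))) (R := R') hq
    (fun x => by
      have h1 := clm_norm_le (fderiv ℝ (fderiv ℝ (fun y => W (t, y))) x)
      have h1a := clm_norm_le
        (fderiv ℝ (fderiv ℝ (fun y => W (t, y))) x (EuclideanSpace.single 0 1))
      have h1b := clm_norm_le
        (fderiv ℝ (fderiv ℝ (fun y => W (t, y))) x (EuclideanSpace.single 1 1))
      simp only [fderiv_fderiv_slice hW, Real.norm_eq_abs] at h1a h1b
      have h2 := sum_second_le_dens W (t, x)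
      simp only [Fin.sum_univ_two] at h2
      set a := dd (xdir 0) (dd (xdir 0) W) (t, x)
      set b := dd (xdir 0) (dd (xdir 1) W) (t, x)
      set c := dd (xdir 1) (dd (xdir 0) W) (t, x)
      set d := dd (xdir 1) (dd (xdir 1) W) (t, x)
      have h3 := pow_le_pow_left₀ (norm_nonneg _)
        (h1.trans (add_le_add h1a h1b)) 2
      rw [← sq_abs a, ← sq_abs b, ← sq_abs c, ← sq_abs d] at h2
      nlinarith [sq_nonneg (|a| - |b|), sq_nonneg (|a| - |c|), sq_nonneg (|a| - |d|),
        sq_nonneg (|b| - |c|), sq_nonneg (|b| - |d|), sq_nonneg (|c| - |d|)])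
    (fun x hx => by
      have h1 : fderiv ℝ (fun x => W (t, x)) =ᶠ[nhds x] fun _ => 0 := by
        have h2 := (hev x hx).fderiv (𝕜 := ℝ)
        rwa [fderiv_fun_const] at h2
      simpa using h1.fderiv_eq (𝕜 := ℝ))
  rw [hE] at b0 b1 b2
  change _ + (eLpNorm (fderiv ℝ fun x => W (t, x)) 2 volume).toReal
    + (eLpNorm (fderiv ℝ (fderiv ℝ fun x => W (t, x))) 2 volume).toReal ≤ _
  linarith

/-! ### The estimate -/

/-- A priori `H²` estimate for a transported scalar: if `∂ₜω + u·∇ω = 0` on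
`[0,1]` with `ω(0) = ω₀ ∈ C_c^∞(ℝ²)`, `u` smooth divergence-free with
`max_t(‖D²u(t)‖_{L⁴} + ‖Du(t)‖_∞) ≤ C₁`, then
`max_{0≤t≤1} ‖ω(t)‖_{H²} ≤ C₂` with `C₂` depending only on `‖ω₀‖_{H²}` and `C₁`. -/
theorem transport_h2_estimate (C₁ B : ℝ) (hC₁ : 0 ≤ C₁) (hB : 0 ≤ B) :
    ∃ C₂ : ℝ, ∀ (u : ℝ → EuclideanSpace ℝ (Fin 2) → EuclideanSpace ℝ (Fin 2))
      (ω : ℝ → EuclideanSpace ℝ (Fin 2) → ℝ)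
      (ω₀ : EuclideanSpace ℝ (Fin 2) → ℝ),
      ContDiff ℝ (⊤ : ℕ∞) (fun p : ℝ × EuclideanSpace ℝ (Fin 2) => u p.1 p.2) →
      (∀ t x, fderiv ℝ (u t) x (EuclideanSpace.single 0 1) 0
          + fderiv ℝ (u t) x (EuclideanSpace.single 1 1) 1 = 0) →
      ContDiff ℝ (⊤ : ℕ∞) (fun p : ℝ × EuclideanSpace ℝ (Fin 2) => ω p.1 p.2) →
      ContDiff ℝ (⊤ : ℕ∞) ω₀ → HasCompactSupport ω₀ → ω 0 = ω₀ →
      h2Norm ω₀ ≤ B →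
      (∀ t ∈ Icc (0:ℝ) 1,
        eLpNorm (fun x => fderiv ℝ (fderiv ℝ (u t)) x) 4 volume ≤ ENNReal.ofReal C₁ ∧
        ∀ x, ‖fderiv ℝ (u t) x‖ ≤ C₁) →
      (∀ t ∈ Icc (0:ℝ) 1, ∀ x, HasDerivAt (fun s => ω s x)
          (-(fderiv ℝ (ω t) x (u t x))) t) →
      ∀ t ∈ Icc (0:ℝ) 1, h2Norm (ω t) ≤ C₂ := by
  obtain ⟨K₀, hK₀, hL⟩ := exists_ladyzhenskaya
  refine ⟨3 * √(4 * (7 * B ^ 2 * Real.exp (40 * C₁ + 8 + 32 * C₁ ^ 2 * √K₀))), ?_⟩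
  rintro u ω ω₀ hu hdivu hω - hsupp rfl hB0 hbd heq t ht
  let Uv : ℝ × Plane → Plane := fun p => u p.1 p.2
  let U : Fin 2 → ℝ × Plane → ℝ := fun j p => u p.1 p.2 j
  let W : ℝ × Plane → ℝ := fun p => ω p.1 p.2
  have hUv : ContDiff ℝ (⊤ : ℕ∞) Uv := hu
  have hW : ContDiff ℝ (⊤ : ℕ∞) W := hω
  have hU (j : Fin 2) : ContDiff ℝ (⊤ : ℕ∞) (U j) :=
    (EuclideanSpace.proj (𝕜 := ℝ) j).contDiff.comp hUv
  have d1 (v : ℝ × Plane) (j : Fin 2) : dd v (U j) = fun p => dd v Uv p j := dd_coord hUv v j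
  have d2 (v w : ℝ × Plane) (j : Fin 2) :
      dd w (dd v (U j)) = fun p => dd w (dd v Uv) p j := by
    rw [d1]
    exact dd_coord (dd_contDiff hUv v) w j
  have hdiv : ∀ p, ∑ j, dd (xdir j) (U j) p = 0 := by
    rintro ⟨s, x⟩
    rw [Fin.sum_univ_two, d1, d1]
    simp only [xdir, ← fderiv_slice hUv]
    exact hdivu s x
  -- The hypothesis on `∂ₜω` in terms of the space-time function `W`.
  have hT : ∀ s ∈ Icc (0:ℝ) 1, ∀ x, transp U W (s, x) = 0 := by
    intro s hs x
    have h1 : HasDerivAt (fun r => W (r, x)) (dd tdir W (s, x)) s := by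
      have h2 : HasDerivAt (fun r : ℝ => (r, x)) tdir s :=
        (hasDerivAt_id s).prodMk (hasDerivAt_const s x)
      exact (hW.differentiable (by simp) (s, x)).hasFDerivAt.comp_hasDerivAt s h2
    have h3 := h1.unique (heq s hs x)
    have h4 : fderiv ℝ (ω s) x (u s x) = ∑ j, U j (s, x) * dd (xdir j) W (s, x) := by
      conv_lhs => rw [plane_eq (u s x)]
      rw [map_add, map_smul, map_smul, Fin.sum_univ_two, xdir, xdir, ← fderiv_slice hW,
        ← fderiv_slice hW]
      rfl
    rw [transp, h3, h4]
    ring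
  obtain ⟨R, hs⟩ := exists_uniform_support hu hW hT hC₁ (fun s hs => (hbd s hs).2) hsupp
  have hgrowth := energy_growth (R' := R + 1) hK₀ hL hU hdiv hW hT (lt_add_one R) hs
    (h := fun s x => ‖fderiv ℝ (fderiv ℝ (u s)) x‖) (C₁ := C₁)
    (fun s => ((((slice_contDiff hUv s).fderiv_right (m := (⊤ : ℕ∞)) (by simp)).fderiv_right
      (m := (⊤ : ℕ∞)) (by simp)).continuous).norm)
    (fun s hs x i j => by
      rw [d1]
      refine (PiLp.norm_apply_le (dd (xdir i) Uv (s, x)) j).trans (le_trans ?_ ((hbd s hs).2 x))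
      rw [xdir, ← fderiv_slice hUv]
      simpa using (fderiv ℝ (fun y => Uv (s, y)) x).le_opNorm (EuclideanSpace.single i 1))
    (fun s _ x k i j => by
      rw [d2]
      exact (PiLp.norm_apply_le (dd (xdir k) (dd (xdir i) Uv) (s, x)) j).trans
        (norm_second_le hUv s x k i))
    (fun s hs => by
      refine setIntegral_pow_le (g := fun x => fderiv ℝ (fderiv ℝ (u s)) x) ?_
        (fun x => (abs_norm (fderiv ℝ (fderiv ℝ (u s)) x)).le) four_ne_zero (by decide) hC₁ ?_
      · exact ((((slice_contDiff hUv s).fderiv_right (m := (⊤ : ℕ∞)) (by simp)).fderiv_right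
          (m := (⊤ : ℕ∞)) (by simp)).continuous).norm
      · exact_mod_cast (hbd s hs).1)
    ht
  have h0 : energy W (R + 1) 0 ≤ 7 * B ^ 2 := energy_le_of_h2Norm_le hW hsupp hB hB0
  refine (h2Norm_le_of_energy hW (lt_add_one R) (hs t ht)).trans ?_
  gcongr
  exact hgrowth.trans (by gcongr)

end
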